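/- For every integer n ≥ 3 and every integer k ≥ 2, the Cartesian product of the complete graph K_n and the even cycle C_{2k} satisfies AT(K_n □ C_{2k}) = ch(K_n □ C_{2k}) = n. -/

import Mathlib

open MvPolynomial Finset

/-- An orientation of a simple graph: a finite set of ordered pairs containing,
for each edge `{u, v}` of `G`, exactly one of `(u, v)` and `(v, u)`. -/
structure GraphOrientation {V : Type*} (G : SimpleGraph V) where
  edges : Finset (V × V)
  adj_of_mem : ∀ e ∈ edges, G.Adj e.1 e.2
  mem_iff_not_swap_mem : ∀ u v : V, G.Adj u v → ((u, v) ∈ edges ↔ (v, u) ∉ edges)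

/-- The graph polynomial `∏_{(i,j) ∈ E} (x_j - x_i)` associated to an orientation. -/
noncomputable def graphPoly {V : Type*} {G : SimpleGraph V} (D : GraphOrientation G) :
    MvPolynomial V ℝ :=
  ∏ e ∈ D.edges, (X e.2 - X e.1)

/-- The outdegree of a vertex in an orientation. -/
def GraphOrientation.outDeg {V : Type*} [DecidableEq V] {G : SimpleGraph V}
    (D : GraphOrientation G) (v : V) : ℕ :=
  (D.edges.filter fun e => e.1 = v).card

/-- `G` is `f`-choosable: any assignment of lists of real colors with `|A_v| ≥ f v`
admits a proper coloring from the lists. -/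
def Choosable {V : Type*} (G : SimpleGraph V) (f : V → ℕ) : Prop :=
  ∀ A : V → Finset ℝ, (∀ v, f v ≤ (A v).card) →
    ∃ c : V → ℝ, (∀ v, c v ∈ A v) ∧ ∀ u v : V, G.Adj u v → c u ≠ c v

/-- The list chromatic number. -/
noncomputable def chNumber {V : Type*} (G : SimpleGraph V) : ℕ :=
  sInf {m | Choosable G fun _ => m}

/-- The Alon–Tarsi number: the least `k` such that the graph polynomial has a
monomial `x^d` with nonzero coefficient and `max_v d_v = k - 1`. -/
noncomputable def ATNumber {V : Type*} (G : SimpleGraph V) : ℕ :=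
  sInf {k | ∃ (D : GraphOrientation G) (d : V →₀ ℕ),
    MvPolynomial.coeff d (graphPoly D) ≠ 0 ∧ d.support.sup d + 1 = k}

instance {α β : Type*} {G : SimpleGraph α} {H : SimpleGraph β}
    [DecidableEq α] [DecidableEq β] [DecidableRel G.Adj] [DecidableRel H.Adj] :
    DecidableRel (G.boxProd H).Adj :=
  fun _ _ => decidable_of_iff _ SimpleGraph.boxProd_adj.symm

/-!
The clique of size `n` gives `n ≤ ch ≤ AT`, so a coefficient of the graph polynomial of
`G □ C_{2k}` has to be found whose exponents are at most `max 2 Δ(G)`. Fix an orientation of `G`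
and a monomial `x^c` of its graph polynomial `F`; every `c v` is at most `deg v`. Prescribe the
exponents `d v = max 2 (c v)` on the even layers of `G □ C_{2k}` and `d' v = deg v + 2 - d v` on
the odd ones. Summing over the choices of terms in the factors of the cycle edges, the coefficient
of this monomial is the trace of a product of transfer matrices, alternately `M_d` and `M_{d'}`.
Exchanging heads and tails of all edges of `G` (the substitution `x ↦ 1/x` in `F`) shows
`M_{d'} = ± M_dᵀ`, so up to sign the coefficient is the trace of `(M_d M_dᵀ)^k`. This is nonzero as
soon as `M_d ≠ 0`, and `M_d` has the coefficient of `x^c` in `F`, up to sign, as one of its entries.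
-/

section AlonTarsi

variable {V : Type*} {G : SimpleGraph V}

theorem graphPoly_isHomogeneous (D : GraphOrientation G) :
    (graphPoly D).IsHomogeneous #D.edges := by
  rw [card_eq_sum_ones]
  exact IsHomogeneous.prod _ _ _ fun e _ => (isHomogeneous_X ℝ e.2).sub (isHomogeneous_X ℝ e.1)

theorem graphPoly_ne_zero (D : GraphOrientation G) : graphPoly D ≠ 0 :=
  prod_ne_zero_iff.2 fun e he =>
    sub_ne_zero.2 fun h => (D.adj_of_mem e he).ne (X_injective h).symm

theorem ne_of_eval_graphPoly_ne_zero (D : GraphOrientation G) {c : V → ℝ}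
    (hc : eval c (graphPoly D) ≠ 0) {u v : V} (huv : G.Adj u v) : c u ≠ c v := by
  have ne_of_mem : ∀ e ∈ D.edges, c e.1 ≠ c e.2 := fun e he h => hc <| by
    rw [graphPoly, map_prod]
    exact prod_eq_zero he (by simp [h])
  by_cases h : (u, v) ∈ D.edges
  · exact ne_of_mem _ h
  · exact (ne_of_mem _ ((D.mem_iff_not_swap_mem v u huv.symm).2 h)).symm

theorem choosable_of_coeff_graphPoly_ne_zero [Finite V] (D : GraphOrientation G) {d : V →₀ ℕ}
    (hd : coeff d (graphPoly D) ≠ 0) : Choosable G fun v => d v + 1 := by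
  intro A hA
  have hdeg : (graphPoly D).totalDegree = d.degree := by
    rw [(graphPoly_isHomogeneous D).totalDegree (graphPoly_ne_zero D)]
    exact (not_imp_comm.1 (graphPoly_isHomogeneous D).coeff_eq_zero hd).symm
  obtain ⟨c, hcA, hc⟩ :=
    combinatorial_nullstellensatz_exists_eval_nonzero _ d hd hdeg A fun v => hA v
  exact ⟨c, hcA, fun u v => ne_of_eval_graphPoly_ne_zero D hc⟩

theorem Choosable.mono {f g : V → ℕ} (h : Choosable G f) (hfg : f ≤ g) : Choosable G g :=
  fun A hA => h A fun v => (hfg v).trans (hA v)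

theorem Choosable.colorable {m : ℕ} (h : Choosable G fun _ => m) : G.Colorable m := by
  let colors : Finset ℝ := (range m).map Nat.castEmbedding
  have hcard : #colors = m := by rw [card_map, card_range]
  obtain ⟨c, hc, hadj⟩ := h (fun _ => colors) fun _ => hcard.ge
  let coloring : G.Coloring colors :=
    SimpleGraph.Coloring.mk (fun v => ⟨c v, hc v⟩) fun huv h => hadj _ _ huv (congrArg (·.1) h)
  simpa only [Fintype.card_coe, hcard] using coloring.colorable

theorem nonempty_graphOrientation [Finite V] (G : SimpleGraph V) :
    Nonempty (GraphOrientation G) := by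
  classical
  have := Fintype.ofFinite V
  let _ : LinearOrder V := WellOrderingRel.isWellOrder.linearOrder
  exact ⟨{
    edges := univ.filter fun e => G.Adj e.1 e.2 ∧ e.1 < e.2
    adj_of_mem := fun e he => (mem_filter.1 he).2.1
    mem_iff_not_swap_mem := fun u v huv => by
      simpa [huv, huv.symm] using lt_iff_le_and_ne.trans (and_iff_left huv.ne) }⟩

theorem atNumber_le_of_coeff_graphPoly_ne_zero (D : GraphOrientation G) {d : V →₀ ℕ}
    (hd : coeff d (graphPoly D) ≠ 0) {m : ℕ} (hm : ∀ v, d v ≤ m) : ATNumber G ≤ m + 1 :=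
  calc
    ATNumber G ≤ d.support.sup d + 1 := Nat.sInf_le ⟨D, d, hd, rfl⟩
    _ ≤ m + 1 := Nat.succ_le_succ (Finset.sup_le fun v _ => hm v)

variable [Finite V]

theorem choosable_atNumber (G : SimpleGraph V) : Choosable G fun _ => ATNumber G := by
  obtain ⟨D⟩ := nonempty_graphOrientation G
  obtain ⟨d, hd⟩ := ne_zero_iff.1 (graphPoly_ne_zero D)
  obtain ⟨D, d, hd, hAT⟩ := Nat.sInf_mem (s := {k | ∃ (D : GraphOrientation G) (d : V →₀ ℕ),
    coeff d (graphPoly D) ≠ 0 ∧ d.support.sup d + 1 = k}) ⟨_, D, d, hd, rfl⟩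
  rw [ATNumber, ← hAT]
  refine (choosable_of_coeff_graphPoly_ne_zero D hd).mono fun v => Nat.succ_le_succ ?_
  by_cases hv : v ∈ d.support
  · exact le_sup (f := d) hv
  · simp [Finsupp.notMem_support_iff.1 hv]

theorem chNumber_le_atNumber (G : SimpleGraph V) : chNumber G ≤ ATNumber G :=
  Nat.sInf_le (choosable_atNumber G)

theorem le_chNumber_of_not_cliqueFree {n : ℕ} (h : ¬G.CliqueFree n) : n ≤ chNumber G := by
  have hch : Choosable G fun _ => chNumber G :=
    Nat.sInf_mem (s := {m | Choosable G fun _ => m}) ⟨_, choosable_atNumber G⟩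
  exact not_lt.1 fun hlt => h (hch.colorable.cliqueFree hlt)

end AlonTarsi

section Trace

theorem sum_fin_succ_pi {ι M : Type*} [Fintype ι] [AddCommMonoid M] {m : ℕ}
    (F : (Fin (m + 1) → ι) → M) : ∑ f, F f = ∑ a, ∑ f : Fin m → ι, F (Fin.cons a f) := by
  rw [← (Fin.consEquiv fun _ => ι).sum_comp, Fintype.sum_prod_type]
  rfl

theorem list_prod_ofFn_apply {ι R : Type*} [Fintype ι] [DecidableEq ι] [CommSemiring R] {m : ℕ}
    (W : Fin (m + 1) → Matrix ι ι R) (a b : ι) :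
    (List.ofFn W).prod a b = ∑ f : Fin m → ι, ∏ i,
      W i ((Fin.cons a f : Fin (m + 1) → ι) i) ((Fin.snoc f b : Fin (m + 1) → ι) i) := by
  induction m generalizing a with
  | zero => simp [Fin.snoc]
  | succ m ih =>
    rw [List.ofFn_succ, List.prod_cons, Matrix.mul_apply, sum_fin_succ_pi]
    refine sum_congr rfl fun c _ => ?_
    rw [ih, mul_sum]
    refine sum_congr rfl fun f _ => ?_
    rw [Fin.prod_univ_succ (n := m + 1)]
    simp only [← Fin.cons_snoc_eq_snoc_cons, Fin.cons_zero, Fin.cons_succ]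

theorem trace_list_prod_ofFn {ι R : Type*} [Fintype ι] [DecidableEq ι] [CommSemiring R] {m : ℕ}
    [NeZero m] (W : Fin m → Matrix ι ι R) :
    (List.ofFn W).prod.trace = ∑ f : Fin m → ι, ∏ i, W i (f i) (f (i + 1)) := by
  obtain ⟨m, rfl⟩ := Nat.exists_eq_succ_of_ne_zero (NeZero.ne m)
  rw [sum_fin_succ_pi]
  refine sum_congr rfl fun a _ => ?_
  rw [Matrix.diag_apply, list_prod_ofFn_apply]
  refine sum_congr rfl fun f _ => prod_congr rfl fun i _ => ?_
  cases i using Fin.lastCases <;> simp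

theorem list_prod_ofFn_ite_even {M : Type*} [Monoid M] (A B : M) (k : ℕ) :
    (List.ofFn fun i : Fin (2 * k) => if Even (i : ℕ) then A else B).prod = (A * B) ^ k := by
  simp [List.ofFn_mul', List.ofFn_succ, List.prod_flatten,
    List.ofFn_const, parity_simps]

variable {ι 𝕜 : Type*} [Fintype ι] [DecidableEq ι] [RCLike 𝕜]

-- `A ^ 2 ^ (j + 1) = B * Bᴴ` with `B = A ^ 2 ^ j`, so a Hermitian `A` is not nilpotent.
open scoped ComplexOrder in
theorem isHermitian_pow_ne_zero {A : Matrix ι ι 𝕜} (hA : A.IsHermitian) (h0 : A ≠ 0) (k : ℕ) :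
    A ^ k ≠ 0 := by
  have two_pow : ∀ j : ℕ, A ^ 2 ^ j ≠ 0 := by
    intro j
    induction j with
    | zero => simpa using h0
    | succ j ih =>
      have hsq : A ^ 2 ^ (j + 1) = A ^ 2 ^ j * (A ^ 2 ^ j).conjTranspose := by
        rw [(hA.pow _).eq, ← pow_add, pow_succ, mul_two]
      rwa [hsq, Ne, Matrix.self_mul_conjTranspose_eq_zero]
  exact fun h => two_pow k (pow_eq_zero_of_le Nat.lt_two_pow_self.le h)

open scoped ComplexOrder in
theorem trace_self_mul_conjTranspose_pow_ne_zero {κ : Type*} [Fintype κ] {M : Matrix ι κ 𝕜}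
    (hM : M ≠ 0) (k : ℕ) : ((M * M.conjTranspose) ^ k).trace ≠ 0 := by
  have hpsd := Matrix.posSemidef_self_mul_conjTranspose M
  rw [Ne, (hpsd.pow k).trace_eq_zero_iff]
  exact isHermitian_pow_ne_zero hpsd.isHermitian (mt Matrix.self_mul_conjTranspose_eq_zero.1 hM) k

end Trace

section Reflection

theorem prod_X_eq_monomial {σ ι R : Type*} [CommSemiring R] (s : Finset ι) (f : ι → σ) :
    ∏ i ∈ s, (X (f i) : MvPolynomial σ R) = monomial (∑ i ∈ s, Finsupp.single (f i) 1) 1 :=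
  (monomial_sum_one s _).symm

variable {V : Type*} {G : SimpleGraph V}

theorem sum_single_fst_add_sum_single_snd_apply [Fintype V] [DecidableRel G.Adj]
    (D : GraphOrientation G) (v : V) :
    (∑ e ∈ D.edges, Finsupp.single e.1 1 + ∑ e ∈ D.edges, Finsupp.single e.2 1 : V →₀ ℕ) v =
      G.degree v := by
  classical
  have count_edge (u : V) : ((if (v, u) ∈ D.edges then 1 else 0) +
      if (u, v) ∈ D.edges then 1 else 0) = if G.Adj v u then 1 else 0 := by
    by_cases h : G.Adj v u
    · have := D.mem_iff_not_swap_mem v u h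
      split_ifs <;> simp_all
    · rw [if_neg (mt (D.adj_of_mem _) h), if_neg (mt (D.adj_of_mem _) (mt SimpleGraph.Adj.symm h)),
        if_neg h]
  rw [← SimpleGraph.card_neighborFinset_eq_degree, SimpleGraph.neighborFinset_eq_filter,
    card_filter]
  simp only [← count_edge, sum_add_distrib, Finsupp.add_apply, Finsupp.finsetSum_apply,
    Finsupp.single_apply]
  congr 1 <;> rw [← Fintype.sum_ite_mem]
  · rw [Fintype.sum_prod_type_right]
    exact sum_congr rfl fun u _ => (Fintype.sum_eq_single v (by simp +contextual)).trans (by simp)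
  · rw [Fintype.sum_prod_type]
    exact sum_congr rfl fun u _ => (Fintype.sum_eq_single v (by simp +contextual)).trans (by simp)

section TailChoice

variable [DecidableEq V]

/-- The exponent of the monomial of `graphPoly D` which picks the variable of the tail from the
factors of the edges in `t`, and the variable of the head from all others. -/
noncomputable def tailChoiceExponent (D : GraphOrientation G) (t : Finset (V × V)) : V →₀ ℕ :=
  ∑ e ∈ D.edges \ t, Finsupp.single e.2 1 + ∑ e ∈ t, Finsupp.single e.1 1

theorem graphPoly_eq_sum_monomial (D : GraphOrientation G) :
    graphPoly D = ∑ t ∈ D.edges.powerset, monomial (tailChoiceExponent D t) ((-1) ^ #t) := by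
  simp only [graphPoly, prod_sub, prod_X_eq_monomial]
  refine sum_congr rfl fun t _ => ?_
  rw [mul_assoc, monomial_mul, ← map_one C, ← map_neg C, ← map_pow, C_mul_monomial, one_mul,
    mul_one, tailChoiceExponent]

theorem tailChoiceExponent_add_sdiff_apply [Fintype V] [DecidableRel G.Adj]
    (D : GraphOrientation G) {t : Finset (V × V)} (ht : t ⊆ D.edges) (v : V) :
    tailChoiceExponent D t v + tailChoiceExponent D (D.edges \ t) v = G.degree v := by
  rw [← sum_single_fst_add_sum_single_snd_apply D, ← sum_sdiff ht,
    ← sum_sdiff (f := fun e => Finsupp.single e.2 1) ht, ← Finsupp.add_apply]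
  simp only [tailChoiceExponent, Finset.sdiff_sdiff_eq_self ht]
  exact DFunLike.congr_fun (by abel) v

end TailChoice

variable [Fintype V] [DecidableRel G.Adj]

theorem le_degree_of_coeff_graphPoly_ne_zero (D : GraphOrientation G) {c : V →₀ ℕ}
    (hc : coeff c (graphPoly D) ≠ 0) (v : V) : c v ≤ G.degree v := by
  classical
  rw [graphPoly_eq_sum_monomial, coeff_sum] at hc
  obtain ⟨t, ht, hct⟩ := exists_ne_zero_of_sum_ne_zero hc
  rw [coeff_monomial, ite_ne_right_iff] at hct
  rw [← tailChoiceExponent_add_sdiff_apply D (mem_powerset.1 ht), hct.1]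
  exact Nat.le_add_right _ _

-- Exchanging the choices of head and tail in all factors turns the exponents of a monomial of
-- `graphPoly D` into their complements in the vertex degrees.
theorem coeff_graphPoly_mul_monomial_reflect (D : GraphOrientation G) {a a' d d' : V →₀ ℕ}
    (h : ∀ v, d v + d' v = a v + a' v + G.degree v) :
    coeff d (graphPoly D * monomial a 1) =
      (-1) ^ #D.edges * coeff d' (graphPoly D * monomial a' 1) := by
  classical
  simp only [graphPoly_eq_sum_monomial, sum_mul, monomial_mul, coeff_sum, coeff_monomial, mul_sum,
    mul_one]
  refine sum_nbij' (D.edges \ ·) (D.edges \ ·) (by simp) (by simp) (by simp +contextual)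
    (by simp +contextual) fun t ht => ?_
  have ht := mem_powerset.1 ht
  have hsign : (-1 : ℝ) ^ #D.edges * (-1) ^ #(D.edges \ t) = (-1) ^ #t := by
    rw [← card_sdiff_add_card_eq_card ht, pow_add, mul_right_comm, ← mul_pow]
    simp
  have hexp : tailChoiceExponent D t + a = d ↔ tailChoiceExponent D (D.edges \ t) + a' = d' := by
    simp only [DFunLike.ext_iff, Finsupp.add_apply]
    refine forall_congr' fun v => ?_
    have := tailChoiceExponent_add_sdiff_apply D ht v
    have := h v
    omega
  simp only [mul_ite, hsign, mul_zero, hexp]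

end Reflection

section BoxProd

namespace GraphOrientation

variable {α β : Type*} [Fintype α] [Fintype β] [DecidableEq α] [DecidableEq β]
  {G : SimpleGraph α} {H : SimpleGraph β}

/-- The orientation of `G □ H` which restricts to `D` on every copy of `G` and to `E` on every copy
of `H`. -/
def boxProd (D : GraphOrientation G) (E : GraphOrientation H) :
    GraphOrientation (G.boxProd H) where
  edges := univ.filter fun e =>
    ((e.1.1, e.2.1) ∈ D.edges ∧ e.1.2 = e.2.2) ∨ ((e.1.2, e.2.2) ∈ E.edges ∧ e.1.1 = e.2.1)
  adj_of_mem e he := by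
    rw [mem_filter_univ] at he
    exact he.imp (And.imp_left (D.adj_of_mem _)) (And.imp_left (E.adj_of_mem _))
  mem_iff_not_swap_mem := by
    rintro ⟨a, i⟩ ⟨b, j⟩ h
    simp only [mem_filter_univ]
    rcases SimpleGraph.boxProd_adj.1 h with ⟨hab, rfl⟩ | ⟨hij, rfl⟩
    · simp [D.mem_iff_not_swap_mem a b hab, hab.ne, hab.ne']
    · simp [E.mem_iff_not_swap_mem i j hij, hij.ne, hij.ne']

theorem graphPoly_boxProd (D : GraphOrientation G) (E : GraphOrientation H) :
    graphPoly (D.boxProd E) =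
      (∏ i, rename (·, i) (graphPoly D)) * ∏ a, rename (a, ·) (graphPoly E) := by
  simp only [graphPoly, boxProd, map_prod, map_sub, rename_X]
  rw [filter_or, prod_union]
  · congr 1 <;> rw [← univ.prod_product']
    · exact prod_nbij' (fun e => (e.1.2, (e.1.1, e.2.1))) (fun p => ((p.2.1, p.1), (p.2.2, p.1)))
        (by simp) (by simp) (by simp +contextual) (by simp) (by simp +contextual)
    · exact prod_nbij' (fun e => (e.1.1, (e.1.2, e.2.2))) (fun p => ((p.1, p.2.1), (p.1, p.2.2)))
        (by simp +contextual) (by simp) (by simp +contextual) (by simp) (by simp +contextual)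
  · exact disjoint_filter.2 fun e _ hD hE => (D.adj_of_mem _ hD.1).ne hE.2

/-- The cyclic orientation `i - 1 → i` of a cycle. -/
def cycle {m : ℕ} [NeZero m] (hm : 3 ≤ m) : GraphOrientation (SimpleGraph.cycleGraph m) where
  edges := univ.filter fun e => e.1 = e.2 - 1
  adj_of_mem := by
    obtain ⟨m, rfl⟩ := Nat.exists_eq_add_of_le' hm
    rintro ⟨i, j⟩ h
    rw [mem_filter_univ] at h
    exact SimpleGraph.cycleGraph_adj.2 (Or.inr (sub_eq_of_eq_add (eq_sub_iff_add_eq'.1 h).symm))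
  mem_iff_not_swap_mem i j h := by
    obtain ⟨m, rfl⟩ := Nat.exists_eq_add_of_le' hm
    have not_both (hij : i - j = 1) : j - i ≠ 1 := fun hji => by
      have htwo : (1 + 1 : Fin (m + 3)) = 0 := calc
        1 + 1 = i - j + (j - i) := by rw [hij, hji]
        _ = 0 := by rw [sub_add_sub_cancel, sub_self]
      simpa [Fin.val_add, Nat.mod_eq_of_lt] using congrArg Fin.val htwo
    have hadj := SimpleGraph.cycleGraph_adj.1 h
    have tail_iff (u v : Fin (m + 3)) : u = v - 1 ↔ v - u = 1 := by
      rw [eq_sub_iff_add_eq', ← eq_sub_iff_add_eq, eq_comm]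
    simp only [mem_filter_univ, tail_iff]
    tauto

theorem graphPoly_cycle {m : ℕ} [NeZero m] (hm : 3 ≤ m) :
    graphPoly (cycle hm) = ∏ i, (X i - X (i - 1)) := by
  simp [graphPoly, cycle, prod_filter, Fintype.prod_prod_type_right]

end GraphOrientation

end BoxProd

section Transfer

variable {V R : Type*}

section Stack

variable {β : Type*} [Fintype β]

/-- The exponent on `V × β` whose restriction to each layer `V × {i}` is `e i`. -/
noncomputable def stackExponents (e : β → V →₀ ℕ) : V × β →₀ ℕ :=
  ∑ i, (e i).mapDomain (·, i)

theorem stackExponents_apply (e : β → V →₀ ℕ) (v : V) (i : β) :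
    stackExponents e (v, i) = e i v := by
  rw [stackExponents, Finsupp.finsetSum_apply, Fintype.sum_eq_single i]
  · exact Finsupp.mapDomain_apply (Prod.mk_left_injective i) _ _
  · exact fun j hj => Finsupp.mapDomain_of_notMem_range _ _ (by simpa using hj)

theorem stackExponents_injective :
    Function.Injective (stackExponents : (β → V →₀ ℕ) → V × β →₀ ℕ) := fun e e' h => by
  ext i v
  rw [← stackExponents_apply e, h, stackExponents_apply]

theorem coeff_stackExponents_prod_rename [CommSemiring R] (P : β → MvPolynomial V R)
    (e : β → V →₀ ℕ) :
    coeff (stackExponents e) (∏ i, rename (·, i) (P i)) = ∏ i, coeff (e i) (P i) := by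
  classical
  have prod_rename : ∏ i, rename (·, i) (P i) = ∑ c ∈ Fintype.piFinset fun i => (P i).support,
      monomial (stackExponents c) (∏ i, coeff (c i) (P i)) := by
    conv_lhs => enter [2, i]; rw [(P i).as_sum, map_sum]
    simp only [prod_univ_sum, rename_monomial, stackExponents, monomial_sum_prod]
  simp only [prod_rename, coeff_sum, coeff_monomial, stackExponents_injective.eq_iff, sum_ite_eq']
  refine ite_eq_left_iff.2 fun h => ?_
  obtain ⟨i, hi⟩ : ∃ i, coeff (e i) (P i) = 0 := by simpa using h
  exact (prod_eq_zero (mem_univ i) hi).symm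

end Stack

variable [Fintype V] [DecidableEq V] [CommRing R]

/-- The exponent contributed to a layer `V × {i}` of `V × Fin m` by the factors
`X (v, j) - X (v, j - 1)` with `j = i`, if `S` is the set of `v` where the second term is chosen,
and those with `j = i + 1`, if `T` is the corresponding set. -/
noncomputable def transferExponent (S T : Finset V) : V →₀ ℕ :=
  ∑ v ∈ Sᶜ, Finsupp.single v 1 + ∑ v ∈ T, Finsupp.single v 1

theorem transferExponent_apply (S T : Finset V) (v : V) :
    transferExponent S T v = (if v ∈ S then 0 else 1) + if v ∈ T then 1 else 0 := by
  simp [transferExponent, Finsupp.single_apply, ite_not]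

/-- The transfer matrix of a layer carrying the polynomial `P` in which the exponent `d` is
prescribed, indexed by the choices of terms in the cycle factors on either side of the layer. -/
noncomputable def transferMatrix (P : MvPolynomial V R) (d : V →₀ ℕ) :
    Matrix (Finset V) (Finset V) R :=
  Matrix.of fun S T => (-1) ^ #S * coeff d (P * monomial (transferExponent S T) 1)

theorem degree_transferExponent (S T : Finset V) : (transferExponent S T).degree = #Sᶜ + #T := by
  simp [transferExponent]

theorem prod_rename_prod_X_sub_X_eq_sum {m : ℕ} [NeZero m] :
    ∏ v : V, rename (v, ·) (∏ i : Fin m, (X i - X (i - 1)) : MvPolynomial (Fin m) R) =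
      ∑ f : Fin m → Finset V, ∏ i : Fin m,
        rename (·, i) (monomial (transferExponent (f i) (f (i + 1))) ((-1) ^ #(f i))) := by
  simp only [map_prod, map_sub, rename_X]
  rw [prod_comm]
  simp only [prod_sub, powerset_univ, prod_univ_sum, Fintype.piFinset_univ]
  refine sum_congr rfl fun f _ => ?_
  have shift : ∏ i, ∏ v ∈ f i, (X (v, i - 1) : MvPolynomial (V × Fin m) R) =
      ∏ i, ∏ v ∈ f (i + 1), X (v, i) := by
    simp [← Equiv.prod_comp (Equiv.addRight (1 : Fin m)) fun i => ∏ v ∈ f i, X (v, i - 1)]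
  have monomial_transferExponent (S T : Finset V) (r : R) :
      monomial (transferExponent S T) r = C r * ((∏ v ∈ Sᶜ, X v) * ∏ v ∈ T, X v) := by
    rw [prod_X_eq_monomial, prod_X_eq_monomial, monomial_mul, C_mul_monomial, one_mul, mul_one,
      transferExponent]
  rw [prod_mul_distrib, shift, ← prod_mul_distrib]
  refine prod_congr rfl fun i _ => ?_
  simp [monomial_transferExponent, compl_eq_univ_sdiff, mul_assoc]

theorem coeff_stackExponents_eq_trace {m : ℕ} [NeZero m] (P : MvPolynomial V R)
    (e : Fin m → V →₀ ℕ) :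
    coeff (stackExponents e) ((∏ i, rename (·, i) P) *
        ∏ v, rename (v, ·) (∏ i : Fin m, (X i - X (i - 1)))) =
      (List.ofFn fun i => transferMatrix P (e i)).prod.trace := by
  rw [prod_rename_prod_X_sub_X_eq_sum, mul_sum, coeff_sum, trace_list_prod_ofFn]
  refine sum_congr rfl fun f _ => ?_
  simp only [← prod_mul_distrib, ← map_mul]
  rw [coeff_stackExponents_prod_rename]
  refine prod_congr rfl fun i _ => ?_
  rw [transferMatrix, Matrix.of_apply, ← coeff_C_mul, mul_left_comm, C_mul_monomial, mul_one]

end Transfer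

section EvenCycle

variable {V : Type*} [Fintype V] [DecidableEq V] {G : SimpleGraph V}

theorem transferMatrix_ne_zero {R : Type*} [CommRing R] {P : MvPolynomial V R} {c d : V →₀ ℕ}
    (hc : coeff c P ≠ 0) (hcd : ∀ v, c v ≤ d v) (hdc : ∀ v, d v ≤ c v + 2) :
    transferMatrix P d ≠ 0 := by
  let S : Finset V := univ.filter fun v => d v = c v
  let T : Finset V := univ.filter fun v => d v = c v + 2
  have hd : d = c + transferExponent S T := by
    ext v
    have := hcd v
    have := hdc v
    rw [Finsupp.add_apply, transferExponent_apply]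
    simp only [S, T, mem_filter_univ]
    split_ifs <;> omega
  have hentry : transferMatrix P d S T = (-1) ^ #S * coeff c P := by
    rw [transferMatrix, Matrix.of_apply, hd, coeff_mul_monomial, mul_one]
  intro h
  rw [h, Matrix.zero_apply, eq_comm] at hentry
  exact hc (((isUnit_one.neg.pow _).mul_right_eq_zero).1 hentry)

variable [DecidableRel G.Adj]

-- By homogeneity, a nonzero entry `(T, S)` forces `#S + #T` to have a fixed parity, so the signs
-- `(-1) ^ #S` and `(-1) ^ #T` on the two sides differ by a global one.
theorem transferMatrix_graphPoly_reflect (D : GraphOrientation G) {d d' : V →₀ ℕ}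
    (h : ∀ v, d v + d' v = G.degree v + 2) :
    transferMatrix (graphPoly D) d' =
      (-1 : ℝ) ^ (d.degree + Fintype.card V) • (transferMatrix (graphPoly D) d).transpose := by
  ext S T
  have hreflect : coeff d' (graphPoly D * monomial (transferExponent S T) 1) =
      (-1) ^ #D.edges * coeff d (graphPoly D * monomial (transferExponent T S) 1) := by
    refine coeff_graphPoly_mul_monomial_reflect D fun v => ?_
    rw [transferExponent_apply, transferExponent_apply, ← Nat.add_comm (d v), h]
    split_ifs <;> omega
  simp only [transferMatrix, Matrix.of_apply, Matrix.smul_apply, Matrix.transpose_apply,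
    smul_eq_mul, hreflect]
  by_cases h0 : coeff d (graphPoly D * monomial (transferExponent T S) 1) = 0
  · simp only [h0, mul_zero]
  have hdeg : d.degree = #D.edges + (#Tᶜ + #S) := by
    rw [← degree_transferExponent]
    exact not_imp_comm.1 ((graphPoly_isHomogeneous D).mul
      (isHomogeneous_monomial (1 : ℝ) rfl)).coeff_eq_zero h0
  have hsign : (-1 : ℝ) ^ (#S + #D.edges) = (-1) ^ (d.degree + Fintype.card V + #T) := by
    refine neg_one_pow_congr ?_
    rw [hdeg, ← card_compl_add_card T]
    grind
  rw [← mul_assoc, ← mul_assoc, ← pow_add, ← pow_add, hsign]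

theorem coeff_graphPoly_boxProd_cycle_ne_zero (D : GraphOrientation G) {c d d' : V →₀ ℕ}
    (hc : coeff c (graphPoly D) ≠ 0) (hcd : ∀ v, c v ≤ d v) (hdc : ∀ v, d v ≤ c v + 2)
    (h : ∀ v, d v + d' v = G.degree v + 2) {k : ℕ} [NeZero (2 * k)] (hk : 3 ≤ 2 * k) :
    coeff (stackExponents fun i : Fin (2 * k) => if Even (i : ℕ) then d else d')
      (graphPoly (D.boxProd (GraphOrientation.cycle hk))) ≠ 0 := by
  rw [GraphOrientation.graphPoly_boxProd, GraphOrientation.graphPoly_cycle,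
    coeff_stackExponents_eq_trace]
  simp only [apply_ite (transferMatrix (graphPoly D)), list_prod_ofFn_ite_even,
    transferMatrix_graphPoly_reflect D h, mul_smul_comm, smul_pow, Matrix.trace_smul, smul_eq_mul]
  rw [← Matrix.conjTranspose_eq_transpose_of_trivial]
  exact mul_ne_zero (pow_ne_zero _ (pow_ne_zero _ (neg_ne_zero.2 one_ne_zero)))
    (trace_self_mul_conjTranspose_pow_ne_zero (transferMatrix_ne_zero hc hcd hdc) k)

end EvenCycle

section Bounds

variable {V : Type*} [Fintype V] {G : SimpleGraph V} [DecidableRel G.Adj]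

theorem atNumber_boxProd_cycleGraph_le {m : ℕ} (hm : 2 ≤ m) (hG : ∀ v, G.degree v ≤ m) {k : ℕ}
    (hk : 2 ≤ k) : ATNumber (G.boxProd (SimpleGraph.cycleGraph (2 * k))) ≤ m + 1 := by
  classical
  have : NeZero (2 * k) := ⟨by omega⟩
  obtain ⟨D⟩ := nonempty_graphOrientation G
  obtain ⟨c, hc⟩ := ne_zero_iff.1 (graphPoly_ne_zero D)
  have hcG := le_degree_of_coeff_graphPoly_ne_zero D hc
  let d : V →₀ ℕ := Finsupp.equivFunOnFinite.symm fun v => max 2 (c v)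
  let d' : V →₀ ℕ := Finsupp.equivFunOnFinite.symm fun v => G.degree v + 2 - max 2 (c v)
  have hd (v) : d v = max 2 (c v) := rfl
  have hd' (v) : d' v = G.degree v + 2 - max 2 (c v) := rfl
  refine atNumber_le_of_coeff_graphPoly_ne_zero _ (coeff_graphPoly_boxProd_cycle_ne_zero D hc
    (d := d) (d' := d') (by grind) (by grind) (by grind) (by omega : 3 ≤ 2 * k)) ?_
  rintro ⟨v, i⟩
  rw [stackExponents_apply]
  split_ifs <;> grind

end Bounds

theorem stmt11_general {V : Type*} [Fintype V] (G : SimpleGraph V) [DecidableRel G.Adj] {n : ℕ}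
    (hn : 3 ≤ n) (hdeg : ∀ v, G.degree v < n) (hclique : ¬G.CliqueFree n) {k : ℕ} (hk : 2 ≤ k) :
    ATNumber (G.boxProd (SimpleGraph.cycleGraph (2 * k))) = n ∧
      chNumber (G.boxProd (SimpleGraph.cycleGraph (2 * k))) = n := by
  have : NeZero (2 * k) := ⟨by omega⟩
  have at_le : ATNumber (G.boxProd (SimpleGraph.cycleGraph (2 * k))) ≤ n := by
    obtain ⟨m, rfl⟩ := Nat.exists_eq_add_of_le' (Nat.one_le_of_lt hn)
    exact atNumber_boxProd_cycleGraph_le (by omega) (fun v => Nat.le_of_lt_succ (hdeg v)) hk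
  have le_ch : n ≤ chNumber (G.boxProd (SimpleGraph.cycleGraph (2 * k))) :=
    le_chNumber_of_not_cliqueFree <| mt
      (SimpleGraph.CliqueFree.comap (SimpleGraph.boxProdLeft G _ 0).isContained) hclique
  have ch_le := chNumber_le_atNumber (G.boxProd (SimpleGraph.cycleGraph (2 * k)))
  exact ⟨at_le.antisymm (le_ch.trans ch_le), (ch_le.trans at_le).antisymm le_ch⟩

/-- For every `n ≥ 3` and `k ≥ 2`,
`AT(K_n □ C_{2k}) = ch(K_n □ C_{2k}) = n`. -/
theorem stmt11 (n : ℕ) (hn : 3 ≤ n) (k : ℕ) (hk : 2 ≤ k) :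
    ATNumber ((⊤ : SimpleGraph (Fin n)).boxProd (SimpleGraph.cycleGraph (2 * k))) = n ∧
      chNumber ((⊤ : SimpleGraph (Fin n)).boxProd (SimpleGraph.cycleGraph (2 * k))) = n := by
  exact stmt11_general ⊤ hn
    (fun v => (SimpleGraph.degree_lt_card_verts v).trans_eq (Fintype.card_fin n))
    ((SimpleGraph.not_cliqueFree_iff_top_isContained n).2 .rfl) hk
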